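/- The formal power series identity (1 + F(x))·I(x) = F(x) holds in ℚ[[x]]; equivalently, I(x) = F(x)/(1+F(x)). -/

import Mathlib

def PlusIndec {n : ℕ} (π : Equiv.Perm (Fin n)) : Prop :=
  ¬ ∃ k : ℕ, 1 ≤ k ∧ k < n ∧
    (Finset.univ.filter fun i : Fin n => (i : ℕ) < k).image π =
      Finset.univ.filter fun i : Fin n => (i : ℕ) < k

noncomputable def plusIndecCount (n : ℕ) : ℕ :=
  Nat.card {π : Equiv.Perm (Fin n) // PlusIndec π}

noncomputable def Fps : PowerSeries ℚ :=
  PowerSeries.mk fun k => if k = 0 then 0 else (Nat.factorial k : ℚ)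

noncomputable def Ips : PowerSeries ℚ :=
  PowerSeries.mk fun k => if k = 0 then 0 else (plusIndecCount k : ℚ)

/-- `π` maps the first `k` positions into themselves. -/
def Stab {n : ℕ} (π : Equiv.Perm (Fin n)) (k : ℕ) : Prop :=
  ∀ i : Fin n, (i : ℕ) < k → ((π i : Fin n) : ℕ) < k

theorem stab_iff {n : ℕ} (π : Equiv.Perm (Fin n)) (k : ℕ) :
    (Finset.univ.filter fun i : Fin n => (i : ℕ) < k).image π =
      (Finset.univ.filter fun i : Fin n => (i : ℕ) < k) ↔ Stab π k := by
  constructor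
  · intro h i hi
    have : π i ∈ (Finset.univ.filter fun i : Fin n => (i : ℕ) < k).image π :=
      Finset.mem_image_of_mem _ (by simpa using hi)
    rw [h] at this
    simpa using this
  · intro h
    apply Finset.eq_of_subset_of_card_le
    · intro x hx
      obtain ⟨i, hi, rfl⟩ := Finset.mem_image.1 hx
      simpa using h i (by simpa using hi)
    · rw [Finset.card_image_of_injective _ π.injective]

theorem plusIndec_iff {n : ℕ} (π : Equiv.Perm (Fin n)) :
    PlusIndec π ↔ ∀ m, 1 ≤ m → m < n → ¬ Stab π m := by
  unfold PlusIndec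
  simp only [stab_iff]
  grind

theorem exists_stab {n : ℕ} (π : Equiv.Perm (Fin n)) : ∃ k, 1 ≤ k ∧ Stab π k :=
  ⟨n + 1, by omega, fun _ _ => by omega⟩

open Classical in
/-- The size of the first block. -/
noncomputable def firstBlock {n : ℕ} (π : Equiv.Perm (Fin n)) : ℕ := Nat.find (exists_stab π)

theorem firstBlock_eq_iff {n : ℕ} (π : Equiv.Perm (Fin n)) (k : ℕ) :
    firstBlock π = k ↔ (1 ≤ k ∧ Stab π k) ∧ ∀ m, 1 ≤ m → m < k → ¬ Stab π m := by
  classical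
  unfold firstBlock
  rw [Nat.find_eq_iff]
  grind

theorem firstBlock_le {n : ℕ} (hn : 1 ≤ n) (π : Equiv.Perm (Fin n)) : firstBlock π ≤ n := by
  classical
  exact Nat.find_min' _ ⟨hn, fun _ _ => by omega⟩

/-- Direct sum of permutations. -/
def dsum {b a : ℕ} (p : Equiv.Perm (Fin b) × Equiv.Perm (Fin a)) : Equiv.Perm (Fin (b + a)) :=
  finSumFinEquiv.permCongr (Equiv.Perm.sumCongrHom _ _ p)

theorem dsum_injective {b a : ℕ} : Function.Injective (dsum (b := b) (a := a)) :=
  (Equiv.injective _).comp Equiv.Perm.sumCongrHom_injective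

theorem dsum_castAdd {b a : ℕ} (p : Equiv.Perm (Fin b) × Equiv.Perm (Fin a)) (i : Fin b) :
    dsum p (Fin.castAdd a i) = Fin.castAdd a (p.1 i) := by
  simp [dsum, Equiv.permCongr_apply]

theorem stab_dsum {b a : ℕ} (p : Equiv.Perm (Fin b) × Equiv.Perm (Fin a)) (m : ℕ) (hm : m ≤ b) :
    Stab (dsum p) m ↔ Stab p.1 m := by
  constructor
  · intro h i hi
    have := h (Fin.castAdd a i) (by simpa using hi)
    rw [dsum_castAdd] at this
    simpa using this
  · intro h i hi
    have e : i = Fin.castAdd a ⟨i, by omega⟩ := by ext; simp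
    rw [e, dsum_castAdd]
    simpa using h ⟨i, by omega⟩ hi

theorem exists_dsum {b a : ℕ} (π : Equiv.Perm (Fin (b + a))) (h : Stab π b) :
    ∃ p, dsum p = π := by
  have : (finSumFinEquiv.symm.permCongr π) ∈ (Equiv.Perm.sumCongrHom (Fin b) (Fin a)).range := by
    apply Equiv.Perm.mem_sumCongrHom_range_of_perm_mapsTo_inl
    rintro _ ⟨i, rfl⟩
    have h1 := h (Fin.castAdd a i) (by simp)
    refine ⟨⟨π (Fin.castAdd a i), h1⟩, ?_⟩
    apply finSumFinEquiv.injective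
    ext
    simp [Equiv.permCongr_apply]
  obtain ⟨p, hp⟩ := this
  refine ⟨p, ?_⟩
  unfold dsum
  rw [hp]
  ext i
  simp [Equiv.permCongr_apply]

theorem card_fiber {n b a : ℕ} (hb : 1 ≤ b) (h : b + a = n) :
    Nat.card {π : Equiv.Perm (Fin n) // firstBlock π = b} = a.factorial * plusIndecCount b := by
  subst h
  have key : Nat.card ({π : Equiv.Perm (Fin b) // PlusIndec π} × Equiv.Perm (Fin a)) =
      Nat.card {π : Equiv.Perm (Fin (b + a)) // firstBlock π = b} := by
    have hf : ∀ q : {π : Equiv.Perm (Fin b) // PlusIndec π} × Equiv.Perm (Fin a),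
        firstBlock (dsum (q.1.1, q.2)) = b := by
      rintro ⟨⟨σ, hσ⟩, τ⟩
      rw [plusIndec_iff] at hσ
      rw [firstBlock_eq_iff]
      refine ⟨⟨hb, (stab_dsum _ _ le_rfl).2 fun i _ => by omega⟩, fun m h1 h2 h3 => ?_⟩
      exact hσ m h1 h2 ((stab_dsum _ _ h2.le).1 h3)
    refine Nat.card_eq_of_bijective (fun q => ⟨dsum (q.1.1, q.2), hf q⟩) ⟨?_, ?_⟩
    · rintro ⟨⟨σ, hσ⟩, τ⟩ ⟨⟨s2, hs2⟩, t2⟩ e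
      have := dsum_injective (Subtype.ext_iff.1 e)
      simpa using this
    · rintro ⟨π, hπ⟩
      have hpi2 := hπ
      rw [firstBlock_eq_iff] at hpi2
      obtain ⟨⟨-, hs⟩, hm⟩ := hpi2
      obtain ⟨p, rfl⟩ := exists_dsum π hs
      refine ⟨⟨⟨p.1, ?_⟩, p.2⟩, rfl⟩
      rw [plusIndec_iff]
      intro m h1 h2 h3
      exact hm m h1 h2 ((stab_dsum _ _ h2.le).2 h3)
  rw [← key, Nat.card_prod, Nat.card_perm, Nat.card_fin, mul_comm, plusIndecCount]

theorem factorial_eq {n : ℕ} (hn : 1 ≤ n) :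
    n.factorial = ∑ p ∈ Finset.HasAntidiagonal.antidiagonal n,
      p.1.factorial * (if p.2 = 0 then 0 else plusIndecCount p.2) := by
  classical
  have h := Finset.card_eq_sum_card_fiberwise (s := (Finset.univ : Finset (Equiv.Perm (Fin n))))
    (t := Finset.HasAntidiagonal.antidiagonal n) (f := fun π => (n - firstBlock π, firstBlock π))
    (by
      intro π _
      have := firstBlock_le hn π
      simp only [Finset.mem_coe, Finset.HasAntidiagonal.mem_antidiagonal]
      omega)
  rw [Finset.card_univ, Fintype.card_perm, Fintype.card_fin] at h
  rw [h]
  apply Finset.sum_congr rfl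
  rintro ⟨a, b⟩ hp
  rw [Finset.HasAntidiagonal.mem_antidiagonal] at hp
  simp only at hp
  have e : (Finset.univ.filter fun π : Equiv.Perm (Fin n) =>
      (n - firstBlock π, firstBlock π) = (a, b)) =
      Finset.univ.filter fun π : Equiv.Perm (Fin n) => firstBlock π = b := by
    ext π
    simp only [Finset.mem_filter, Finset.mem_univ, true_and, Prod.mk.injEq]
    omega
  rw [e]
  rcases Nat.eq_zero_or_pos b with rfl | hb
  · simp only [if_true, mul_zero, Finset.card_eq_zero, Finset.filter_eq_empty_iff]
    intro π _ h0
    rw [firstBlock_eq_iff] at h0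
    omega
  · have := card_fiber (n := n) (a := a) hb (by omega)
    rw [Nat.card_eq_fintype_card, Fintype.card_subtype] at this
    rw [this, if_neg (by omega)]

/-- `(1 + F(x))·I(x) = F(x)` in `ℚ[[x]]`, i.e. `I(x) = F(x)/(1+F(x))`. -/
theorem one_add_F_mul_I_eq_F : (1 + Fps) * Ips = Fps := by
  ext n
  have h1 : ∀ k, PowerSeries.coeff k (1 + Fps) = (k.factorial : ℚ) := by
    intro k
    rcases Nat.eq_zero_or_pos k with rfl | hk
    · simp [Fps]
    · simp [Fps, PowerSeries.coeff_one, hk.ne']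
  rw [PowerSeries.coeff_mul]
  simp only [h1]
  rcases Nat.eq_zero_or_pos n with rfl | hn
  · simp [Fps, Ips]
  · simp only [Fps, Ips, PowerSeries.coeff_mk, if_neg hn.ne']
    rw [factorial_eq hn]
    push_cast
    rfl
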